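/- arXiv:2501.12846 — 6 statements merged into one kernel-verified Lean document; each statement's English description precedes it below -/
import Mathlib

section
/- For every n ≥ 1, every i ∈ ℕ and all p, q ∈ ℕ^(ℕ^(n+1)): p =_{ℕ^ℕ}^{n+} q if and only if ⊗_{n+1,i}(p) =_{ℕ^ℕ}^{n+} ⊗_{n+1,i}(q); moreover, for all i ≠ j and all p, q ∈ ℕ^(ℕ^(n+1)), it is not the case that ⊗_{n+1,i}(p) =_{ℕ^ℕ}^{n+} ⊗_{n+1,j}(q). -/
/-!  Common definitions.

`Tower n` is the space ℕ^(ℕ^(n+1)) of the paper: `Tower 0 = ℕ → ℕ`,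
`Tower (n+1) = ℕ → Tower n`, each with the product topology (ℕ discrete).
-/

def Tower : ℕ → Type
  | 0 => ℕ → ℕ
  | n + 1 => ℕ → Tower n

instance Tower.topologicalSpace : (n : ℕ) → TopologicalSpace (Tower n)
  | 0 => inferInstanceAs (TopologicalSpace (ℕ → ℕ))
  | n + 1 => letI := Tower.topologicalSpace n
             inferInstanceAs (TopologicalSpace (ℕ → Tower n))

/-- The Friedman–Stanley jump `E⁺` of an equivalence relation `E` on `X`. -/
def FSJump {X : Type*} (E : X → X → Prop) (p q : ℕ → X) : Prop :=
  (∀ k, ∃ l, E (p k) (q l)) ∧ ∀ l, ∃ k, E (q l) (p k)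

/-- The power `E^ω` of an equivalence relation `E` on `X`. -/
def RelPow {X : Type*} (E : X → X → Prop) (p q : ℕ → X) : Prop :=
  ∀ k, E (p k) (q k)

/-- `eqNatPlus n` is the relation `=_ℕ^{(n+1)+}` on `Tower n = ℕ^(ℕ^(n+1))`. -/
def eqNatPlus : (n : ℕ) → Tower n → Tower n → Prop
  | 0 => FSJump (· = · : ℕ → ℕ → Prop)
  | n + 1 => FSJump (eqNatPlus n)

/-- `eqBairePlus n` is the relation `=_{ℕ^ℕ}^{(n+1)+}` on `Tower (n+1) = ℕ^(ℕ^(n+2))`. -/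
def eqBairePlus : (n : ℕ) → Tower (n + 1) → Tower (n + 1) → Prop
  | 0 => FSJump (· = · : (ℕ → ℕ) → (ℕ → ℕ) → Prop)
  | n + 1 => FSJump (eqBairePlus n)

/-- `FullRel m` on `Tower m = ℕ^(ℕ^(m+1))`: for `m = 2n` it is `(=_ℕ^+)^{n(ω+)}`,
for `m = 2n+1` it is `(=_{ℕ^ℕ}^+)^{n(ω+)}` (with `E^{0(ω+)} = E`,
`E^{(n+1)(ω+)} = ((E^{n(ω+)})^ω)^+`). -/
def FullRel : (m : ℕ) → Tower m → Tower m → Prop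
  | 0 => FSJump (· = · : ℕ → ℕ → Prop)
  | 1 => FSJump (· = · : (ℕ → ℕ) → (ℕ → ℕ) → Prop)
  | m + 2 => FSJump (RelPow (FullRel m))

/-- The pair of canonical elements `(F_{m+1}, I_{m+1})` of `Tower m = ℕ^(ℕ^(m+1))`. -/
def can : (m : ℕ) → Tower m × Tower m
  | 0 => (fun k => if k = 0 then 0 else 1, fun _ => 1)
  | 1 => (fun i k => if i = 0 then 0 else if k + 1 < i then 0 else 1,
          fun i k => if k < i then 0 else 1)
  | m + 2 =>
      (fun i k => if i = 0 then (can m).1 else if k + 1 < i then (can m).1 else (can m).2,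
       fun i k => if k < i then (can m).1 else (can m).2)

/-- The canonical element `F_{m+1} ∈ ℕ^(ℕ^(m+1))`. -/
def canF (m : ℕ) : Tower m := (can m).1

/-- The canonical element `I_{m+1} ∈ ℕ^(ℕ^(m+1))`. -/
def canI (m : ℕ) : Tower m := (can m).2

/-- `p ∈ Tower m = ℕ^(ℕ^(m+1))` is `full_{m+1}`. -/
def IsFull (m : ℕ) (p : Tower m) : Prop := FullRel m p (canF m)

/-- `p ∈ Tower m = ℕ^(ℕ^(m+1))` is `initial_{m+1}`. -/
def IsInitial (m : ℕ) (p : Tower m) : Prop := FullRel m p (canI m)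

open Classical in
/-- The permission operator `∧₀`. -/
noncomputable def perm0 (p q : ℕ → ℕ) : ℕ → ℕ :=
  fun k => if ∀ j ≤ k, p j = q j then p k else 1

/-- The permission operator `∧_{m+1}` on `Tower m = ℕ^(ℕ^(m+1))`
(with `⟨·,·⟩ = Nat.pair`). -/
noncomputable def perm : (m : ℕ) → Tower m → Tower m → Tower m
  | 0, p, q => fun x => max (p (Nat.unpair x).1) (q (Nat.unpair x).2)
  | 1, p, q => fun x => perm0 (p (Nat.unpair x).1) (q (Nat.unpair x).2)
  | m + 2, p, q => fun x k => perm m (p (Nat.unpair x).1 k) (q (Nat.unpair x).2 k)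

/-- The operator `⊗_{m+1,i}` on `Tower m = ℕ^(ℕ^(m+1))` (with `⟨·,·⟩ = Nat.pair`). -/
def otimes : (m : ℕ) → ℕ → Tower m → Tower m
  | 0, i, p => fun k => Nat.pair (p k) i
  | m + 1, i, p => fun k => otimes m i (p k)

/-- `E` continuously reduces to `F`. -/
def ContReduces {X Y : Type*} [TopologicalSpace X] [TopologicalSpace Y]
    (E : X → X → Prop) (F : Y → Y → Prop) : Prop :=
  ∃ f : X → Y, Continuous f ∧ ∀ x x', E x x' ↔ F (f x) (f x')

/-- `SigmaLevel X n` is the pointclass `Σ⁰_{n+1}(X)`: `Σ⁰_1` = open sets,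
`Σ⁰_{n+1}` = countable unions of complements of `Σ⁰_n` sets. -/
def SigmaLevel (X : Type*) [TopologicalSpace X] : ℕ → Set (Set X)
  | 0 => {C | IsOpen C}
  | n + 1 => {C | ∃ A : ℕ → Set X, (∀ i, A i ∈ SigmaLevel X n) ∧ C = ⋃ i, (A i)ᶜ}

/-- The space of `(ι, ar)`-structures with domain ℕ. -/
def Md (ι : Type) (ar : ι → ℕ) : Type := ∀ i : ι, (Fin (ar i) → ℕ) → Bool

instance (ι : Type) (ar : ι → ℕ) : TopologicalSpace (Md ι ar) :=
  inferInstanceAs (TopologicalSpace (∀ i : ι, (Fin (ar i) → ℕ) → Bool))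

/-- Isomorphism of structures with domain ℕ. -/
def Iso {ι : Type} {ar : ι → ℕ} (A B : Md ι ar) : Prop :=
  ∃ σ : ℕ → ℕ, Function.Bijective σ ∧ ∀ i v, A i v = B i (σ ∘ v)

/-- The learning domain of a family: the closure of `K` under isomorphism. -/
def LearnDom {ι : Type} {ar : ι → ℕ} (K : Set (Md ι ar)) : Set (Md ι ar) :=
  {S | ∃ A ∈ K, Iso S A}

/-- The family `K` is `E`-learnable. -/
def Learnable {ι : Type} {ar : ι → ℕ} {X : Type*} [TopologicalSpace X]
    (E : X → X → Prop) (K : Set (Md ι ar)) : Prop :=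
  ∃ Γ : LearnDom K → X, Continuous Γ ∧
    ∀ S S' : LearnDom K, (Iso S.1 S'.1 ↔ E (Γ S) (Γ S'))

/-- A countable family of pairwise nonisomorphic structures. -/
def GoodFamily {ι : Type} {ar : ι → ℕ} (K : Set (Md ι ar)) : Prop :=
  K.Countable ∧ ∀ A ∈ K, ∀ B ∈ K, A ≠ B → ¬ Iso A B

/-- `E` is learn-reducible to `F` (w.r.t. structures in `Md ι ar`). -/
def LearnRed (ι : Type) (ar : ι → ℕ) {X Y : Type*} [TopologicalSpace X]
    [TopologicalSpace Y] (E : X → X → Prop) (F : Y → Y → Prop) : Prop :=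
  ∀ K : Set (Md ι ar), GoodFamily K → Learnable E K → Learnable F K

/-- `E` is compact for learning (w.r.t. structures in `Md ι ar`). -/
def CompactForLearning (ι : Type) (ar : ι → ℕ) {X : Type*} [TopologicalSpace X]
    (E : X → X → Prop) : Prop :=
  ∀ K : Set (Md ι ar), GoodFamily K →
    (Learnable E K ↔ ∀ A ∈ K, ∀ B ∈ K, A ≠ B → Learnable E ({A, B} : Set (Md ι ar)))

/-!
`⊗_{n+2,i}` applies `⊗_{n+1,i}` to every column, and the jump turns a columnwise reduction into a
reduction. Sequences related by a jump have related columns, so a relation between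
images under `⊗_{·,i}` and `⊗_{·,j}` descends to an equality in `ℕ^ℕ`, where unpairing any
entry gives `i = j`.
-/

section FSJump

variable {X Y : Type*} {E : X → X → Prop} {F : Y → Y → Prop} {p q : ℕ → X}

theorem FSJump.exists_rel (h : FSJump E p q) : ∃ k l, E (p k) (q l) :=
  ⟨0, h.1 0⟩

theorem fsJump_comp_iff {f : X → Y} (hf : ∀ x y, F (f x) (f y) ↔ E x y) :
    FSJump F (f ∘ p) (f ∘ q) ↔ FSJump E p q := by
  simp only [FSJump, Function.comp_apply, hf]

end FSJump

theorem otimes_zero_injective (i : ℕ) : Function.Injective (otimes 0 i) :=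
  fun _ _ h => funext fun k => (Nat.pair_eq_pair.1 (congrFun h k)).1

theorem eq_of_otimes_zero_eq {i j : ℕ} {p q : Tower 0} (h : otimes 0 i p = otimes 0 j q) :
    i = j :=
  (Nat.pair_eq_pair.1 (congrFun h 0)).2

theorem eqBairePlus_otimes_iff (n i : ℕ) (p q : Tower (n + 1)) :
    eqBairePlus n (otimes (n + 1) i p) (otimes (n + 1) i q) ↔ eqBairePlus n p q := by
  induction n with
  | zero => exact fsJump_comp_iff fun _ _ => (otimes_zero_injective i).eq_iff
  | succ n ih => exact fsJump_comp_iff ih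

theorem eq_of_eqBairePlus_otimes {n i j : ℕ} {p q : Tower (n + 1)}
    (h : eqBairePlus n (otimes (n + 1) i p) (otimes (n + 1) j q)) : i = j := by
  induction n with
  | zero =>
    obtain ⟨_, _, hcol⟩ := FSJump.exists_rel h
    exact eq_of_otimes_zero_eq hcol
  | succ n ih =>
    obtain ⟨_, _, hcol⟩ := FSJump.exists_rel h
    exact ih hcol

/-- Proposition `otimes` for `=_{ℕ^ℕ}^{n+}`. Here `n : ℕ` ranges over
the paper's `n ≥ 1` via the shift: `Tower (n+1) = ℕ^(ℕ^(n+2))`,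
`eqBairePlus n = =_{ℕ^ℕ}^{(n+1)+}`, `otimes (n+1) i = ⊗_{n+2,i}`. -/
theorem stmt_1 (n : ℕ) :
    (∀ i : ℕ, ∀ p q : Tower (n + 1),
        eqBairePlus n p q ↔ eqBairePlus n (otimes (n + 1) i p) (otimes (n + 1) i q)) ∧
    (∀ i j : ℕ, i ≠ j → ∀ p q : Tower (n + 1),
        ¬ eqBairePlus n (otimes (n + 1) i p) (otimes (n + 1) j q)) := by
  exact ⟨fun i p q => (eqBairePlus_otimes_iff n i p q).symm,
    fun _ _ hij _ _ h => hij (eq_of_eqBairePlus_otimes h)⟩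
end

section
/- For every n ≥ 1, the equivalence relations (=_ℕ^{n+})^ω (on ℕ → ℕ^(ℕ^n) with the product topology) and =_ℕ^{n+} (on ℕ^(ℕ^n)) are continuously bireducible. -/
/-!
The relation `E^ω` compares the columns `p i` index by index, whereas `E⁺` forgets the order of a
sequence. The order can be recovered by tagging: if every element of the column `p i` is replaced
by a copy marked with `i`, and copies with different marks are inequivalent, then all the columns
can be merged into one sequence without losing information. So it suffices to tag elements
continuously. On `ℕ` this is done by `x ↦ ⟨x, i⟩`, and tagging the terms of a sequence one by one
lifts a tagging from `E` to `E⁺`.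
-/

variable {X Y : Type*} [TopologicalSpace X] [TopologicalSpace Y]
  {E : X → X → Prop} {F : Y → Y → Prop}

theorem contReduces_relPow (E : X → X → Prop) : ContReduces E (RelPow E) :=
  ⟨fun x _ => x, continuous_pi fun _ => continuous_id, fun _ _ => (forall_const ℕ).symm⟩

/-- The maps `g i` jointly form a continuous reduction to `F` of the disjoint sum of `ι` copies of
`E`; the image `g i x` is thought of as `x` tagged with `i`. -/
structure IsTagging {ι : Type*} (E : X → X → Prop) (F : Y → Y → Prop) (g : ι → X → Y) : Prop where
  continuous : ∀ i, Continuous (g i)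
  rel_iff : ∀ i j x y, F (g i x) (g j y) ↔ i = j ∧ E x y

/-- The columns of `p` merged into a single sequence through `Nat.pair`, the elements of the
`i`-th column being tagged with `i` by `g i`. -/
def mergeTagged {X Y : Type*} (g : ℕ → X → Y) (p : ℕ → ℕ → X) (k : ℕ) : Y :=
  g k.unpair.1 (p k.unpair.1 k.unpair.2)

namespace IsTagging

theorem fsJump {ι : Type*} {g : ι → X → Y} (hg : IsTagging E F g) :
    IsTagging (FSJump E) (FSJump F) fun i p k => g i (p k) where
  continuous i := continuous_pi fun k => (hg.continuous i).comp (continuous_apply k)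
  rel_iff i j p q := by
    simp only [FSJump, hg.rel_iff, exists_and_left, forall_and, forall_const, eq_comm (a := j),
      ← and_and_left]

variable {g : ℕ → X → Y}

theorem continuous_mergeTagged (hg : IsTagging E F g) : Continuous (mergeTagged g) :=
  continuous_pi fun _ => (hg.continuous _).comp (continuous_apply_apply _ _)

theorem forall_exists_rel_mergeTagged_iff (hg : IsTagging E F g) (p q : ℕ → ℕ → X) :
    (∀ k, ∃ l, F (mergeTagged g p k) (mergeTagged g q l)) ↔
      ∀ i k, ∃ l, E (p i k) (q i l) := by
  rw [Nat.pairEquiv.surjective.forall, Prod.forall]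
  refine forall₂_congr fun i k => ?_
  rw [Nat.pairEquiv.surjective.exists]
  simp [mergeTagged, hg.rel_iff]

theorem contReduces_relPow_fsJump (hg : IsTagging E F g) :
    ContReduces (RelPow (FSJump E)) (FSJump F) := by
  refine ⟨mergeTagged g, hg.continuous_mergeTagged, fun p q => ?_⟩
  rw [FSJump, hg.forall_exists_rel_mergeTagged_iff, hg.forall_exists_rel_mergeTagged_iff,
    ← forall_and]
  rfl

end IsTagging

theorem isTagging_natPair : IsTagging Eq Eq fun i x : ℕ => Nat.pair x i where
  continuous _ := continuous_of_discreteTopology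
  rel_iff i j x y := by rw [Nat.pair_eq_pair, and_comm]

theorem isTagging_otimes : ∀ n, IsTagging (eqNatPlus n) (eqNatPlus n) (otimes n)
  | 0 => isTagging_natPair.fsJump
  | n + 1 => (isTagging_otimes n).fsJump

/-- for every `n ≥ 1` (here via the shift `eqNatPlus n = =_ℕ^{(n+1)+}`),
`(=_ℕ^{n+})^ω` and `=_ℕ^{n+}` are continuously bireducible. -/
theorem stmt_2 (n : ℕ) :
    ContReduces (RelPow (eqNatPlus n)) (eqNatPlus n) ∧
    ContReduces (eqNatPlus n) (RelPow (eqNatPlus n)) := by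
  refine ⟨?_, contReduces_relPow (eqNatPlus n)⟩
  cases n with
  | zero => exact isTagging_natPair.contReduces_relPow_fsJump
  | succ n => exact (isTagging_otimes n).contReduces_relPow_fsJump
end

section
/- For every n ≥ 0, the canonical elements F_{2n+1} and I_{2n+1} of ℕ^(ℕ^(2n+1)) are not (=_ℕ^+)^{n(ω+)}-equivalent, and the canonical elements F_{2n+2} and I_{2n+2} of ℕ^(ℕ^(2n+2)) are not (=_{ℕ^ℕ}^+)^{n(ω+)}-equivalent. -/
theorem not_fsJump_of_forall_not {X : Type*} {E : X → X → Prop} {p q : ℕ → X} {k : ℕ}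
    (h : ∀ l, ¬ E (p k) (q l)) : ¬ FSJump E p q := fun hpq =>
  let ⟨l, hl⟩ := hpq.1 k
  h l hl

theorem not_fsJump_relPow_of_diagonal {X : Type*} {E : X → X → Prop} {p q : ℕ → ℕ → X} {k : ℕ}
    (h : ∀ l, ¬ E (p k l) (q l l)) : ¬ FSJump (RelPow E) p q :=
  not_fsJump_of_forall_not fun l hl => h l (hl l)

theorem relPow_eq {X : Type*} : RelPow (Eq : X → X → Prop) = Eq := by
  funext p q
  exact propext funext_iff.symm

theorem fullRel_one : FullRel 1 = FSJump (RelPow (Eq : ℕ → ℕ → Prop)) := by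
  rw [relPow_eq]
  rfl

theorem canF_one_zero_apply (k : ℕ) : (canF 1 : ℕ → ℕ → ℕ) 0 k = 0 := rfl

theorem canF_add_two_zero_apply (m k : ℕ) : (canF (m + 2) : ℕ → ℕ → Tower m) 0 k = canF m := rfl

theorem canI_one_apply_self (l : ℕ) : (canI 1 : ℕ → ℕ → ℕ) l l = 1 :=
  if_neg (lt_irrefl l)

theorem canI_add_two_apply_self (m l : ℕ) :
    (canI (m + 2) : ℕ → ℕ → Tower m) l l = canI m :=
  if_neg (lt_irrefl l)

/-- Column `0` of `F` is constantly the `F` two levels below (or `0`), whereas column `l` of `I` has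
the `I` two levels below (or `1`) in position `l`; so no column of `I` matches column `0` of `F`. -/
theorem not_fullRel_canF_canI : ∀ m : ℕ, ¬ FullRel m (canF m) (canI m)
  | 0 => not_fsJump_of_forall_not (k := 0) fun _ => zero_ne_one
  | 1 => by
    rw [fullRel_one]
    refine not_fsJump_relPow_of_diagonal (k := 0) fun l => ?_
    rw [canF_one_zero_apply, canI_one_apply_self]
    exact zero_ne_one
  | m + 2 => by
    refine not_fsJump_relPow_of_diagonal (E := FullRel m) (k := 0) fun l => ?_
    rw [canF_add_two_zero_apply, canI_add_two_apply_self]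
    exact not_fullRel_canF_canI m

/-- `F_{2n+1}` and `I_{2n+1}` are not `(=_ℕ^+)^{n(ω+)}`-equivalent, and
`F_{2n+2}` and `I_{2n+2}` are not `(=_{ℕ^ℕ}^+)^{n(ω+)}`-equivalent. Here
`canF (2*n) = F_{2n+1}`, `canI (2*n) = I_{2n+1}` in `Tower (2*n) = ℕ^(ℕ^(2n+1))`, and
`FullRel (2*n) = (=_ℕ^+)^{n(ω+)}`; similarly at index `2*n+1` for the even case. -/
theorem stmt_4 (n : ℕ) :
    ¬ FullRel (2 * n) (canF (2 * n)) (canI (2 * n)) ∧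
    ¬ FullRel (2 * n + 1) (canF (2 * n + 1)) (canI (2 * n + 1)) :=
  ⟨not_fullRel_canF_canI (2 * n), not_fullRel_canF_canI (2 * n + 1)⟩
end

section
/- Let X be a topological space with a countable basis consisting of clopen sets, and let C ⊆ X be open. Then there is a continuous function Γ : X → ℕ^(ℕ^1) such that Γ(x) is full_1 for every x ∈ C and Γ(x) is initial_1 for every x ∉ C. -/
/-!
The open set `C` is a union of basic clopen sets, and countably many of them suffice because `X`
is hereditarily Lindelöf. So write `C = ⋃ n, U n` with every `U n` clopen, and send `x` to the
sequence `1, a₀, a₁, …` where `aₙ` is `0` if `x ∈ U n` and `1` otherwise. The leading `1` makes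
the range of this sequence contain `1` for every `x`; it contains `0` exactly when `x ∈ C`.
-/

open Set TopologicalSpace

theorem fsJump_eq_iff_range_eq {α : Type*} {p q : ℕ → α} :
    FSJump (· = ·) p q ↔ range p = range q := by
  simp only [FSJump, Subset.antisymm_iff, range_subset_iff, mem_range, eq_comm]

theorem isFull_zero_iff_range_eq {p : ℕ → ℕ} : IsFull 0 p ↔ range p = {0, 1} := by
  have range_canF : range (fun k : ℕ => if k = 0 then 0 else 1) = ({0, 1} : Set ℕ) := by
    simp [← Nat.range_of_succ, Function.comp_def, pair_comm]
  rw [← range_canF]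
  exact fsJump_eq_iff_range_eq

theorem isInitial_zero_iff_range_eq {p : ℕ → ℕ} : IsInitial 0 p ↔ range p = {1} := by
  rw [← range_const (ι := ℕ)]
  exact fsJump_eq_iff_range_eq

section ComplIndicatorSeq

variable {X : Type*} {U : ℕ → Set X} {x : X}

/-- The code `1, a₀, a₁, …` of a point `x` relative to a sequence of sets `U`, where `aₙ` is the
value at `x` of the indicator function of the complement of `U n`. Its range tells whether `x`
belongs to `⋃ n, U n`. -/
noncomputable def complIndicatorSeq (U : ℕ → Set X) (x : X) : ℕ → ℕ
  | 0 => 1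
  | n + 1 => (U n)ᶜ.indicator 1 x

theorem continuous_complIndicatorSeq [TopologicalSpace X] (hU : ∀ n, IsClopen (U n)) :
    Continuous (complIndicatorSeq U) :=
  continuous_pi fun
    | 0 => continuous_const
    | n + 1 => (hU n).compl.continuous_indicator continuous_one

theorem range_complIndicatorSeq_of_mem (hx : x ∈ ⋃ n, U n) :
    range (complIndicatorSeq U x) = {0, 1} := by
  obtain ⟨n, hn⟩ := mem_iUnion.mp hx
  refine Subset.antisymm (range_subset_iff.mpr ?_) (pair_subset ⟨n + 1, ?_⟩ ⟨0, rfl⟩)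
  · rintro (_ | k)
    · exact .inr rfl
    · exact indicator_eq_zero_or_self _ _ _
  · exact indicator_of_notMem (not_not_intro hn) _

theorem range_complIndicatorSeq_of_notMem (hx : x ∉ ⋃ n, U n) :
    range (complIndicatorSeq U x) = {1} := by
  have eq_one : complIndicatorSeq U x = fun _ => 1 := by
    funext k
    cases k with
    | zero => rfl
    | succ n =>
      have mem_compl : x ∈ (U n)ᶜ := fun hn => hx (mem_iUnion_of_mem n hn)
      exact indicator_of_mem mem_compl _
  rw [eq_one, range_const]

theorem exists_continuous_isFull_isInitial_of_isClopen [TopologicalSpace X]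
    (hU : ∀ n, IsClopen (U n)) :
    ∃ Γ : X → Tower 0, Continuous Γ ∧
      (∀ x ∈ ⋃ n, U n, IsFull 0 (Γ x)) ∧ (∀ x ∉ ⋃ n, U n, IsInitial 0 (Γ x)) :=
  ⟨complIndicatorSeq U, continuous_complIndicatorSeq hU,
    fun _ hx => isFull_zero_iff_range_eq.mpr (range_complIndicatorSeq_of_mem hx),
    fun _ hx => isInitial_zero_iff_range_eq.mpr (range_complIndicatorSeq_of_notMem hx)⟩

end ComplIndicatorSeq

section HereditarilyLindelof

variable {X : Type*} [TopologicalSpace X] [HereditarilyLindelofSpace X] {B : Set (Set X)}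
  {C : Set X}

theorem exists_seq_mem_insert_empty_iUnion_eq (hB : IsTopologicalBasis B) (hC : IsOpen C) :
    ∃ U : ℕ → Set X, (∀ n, U n ∈ insert ∅ B) ∧ ⋃ n, U n = C := by
  obtain ⟨S, hSB, rfl⟩ := hB.open_eq_sUnion hC
  have isOpen_coe (V : ↥(insert ∅ S)) : IsOpen (V : Set X) :=
    forall_mem_insert.mpr ⟨isOpen_empty, fun _ hV => hB.isOpen (hSB hV)⟩ V V.2
  obtain ⟨U, hU⟩ := eq_open_union_nat (fun V : ↥(insert ∅ S) => (V : Set X)) isOpen_coe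
  refine ⟨fun n => U n, fun n => insert_subset_insert hSB (U n).2, ?_⟩
  rw [hU, ← sUnion_eq_iUnion, sUnion_insert, empty_union]

theorem stmt_7_general (hBclopen : ∀ U ∈ B, IsClopen U) (hB : IsTopologicalBasis B)
    (hC : IsOpen C) :
    ∃ Γ : X → Tower 0, Continuous Γ ∧
      (∀ x ∈ C, IsFull 0 (Γ x)) ∧ (∀ x ∉ C, IsInitial 0 (Γ x)) := by
  obtain ⟨U, hU, rfl⟩ := exists_seq_mem_insert_empty_iUnion_eq hB hC
  exact exists_continuous_isFull_isInitial_of_isClopen fun n =>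
    forall_mem_insert.mpr ⟨isClopen_empty, hBclopen⟩ (U n) (hU n)

end HereditarilyLindelof

/-- if `X` has a countable basis of clopen sets and `C ⊆ X` is open, then
there is a continuous `Γ : X → ℕ^(ℕ^1)` (`= Tower 0`) which is `full_1` on `C` and
`initial_1` off `C`. -/
theorem stmt_7 {X : Type*} [TopologicalSpace X]
    (hX : ∃ B : Set (Set X), B.Countable ∧ (∀ U ∈ B, IsClopen U) ∧
      TopologicalSpace.IsTopologicalBasis B)
    (C : Set X) (hC : IsOpen C) :
    ∃ Γ : X → Tower 0, Continuous Γ ∧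
      (∀ x ∈ C, IsFull 0 (Γ x)) ∧ (∀ x ∉ C, IsInitial 0 (Γ x)) := by
  obtain ⟨B, hBcountable, hBclopen, hB⟩ := hX
  have := hB.secondCountableTopology hBcountable
  exact stmt_7_general hBclopen hB hC
end

section
/- Let X be a topological space with a countable basis consisting of clopen sets, and let C ⊆ X belong to Σ⁰_2(X). Then there is a continuous function Γ : X → ℕ^(ℕ^2) such that Γ(x) is full_2 for every x ∈ C and Γ(x) is initial_2 for every x ∉ C. -/
/-!
Write `C = ⋃ i, (A i)ᶜ` with `A i = ⋃ n, U i n` and every `U i n` clopen. For each `i`, let a column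
record `0` until the first stage `n` with `x ∈ U i n` and `1` from then on. Each entry is decided by
a clopen set, so the columns depend continuously on `x`. The `i`-th column is `0^ℕ` exactly when
`x ∉ A i`, and of the form `0^a 1^ℕ` otherwise; hence `0^ℕ` shows up iff `x ∈ C`. Interleaving with
a fixed list of all the `0^a 1^ℕ` makes the set of columns exactly the required one.
-/

open Set TopologicalSpace

/-- The sequence `0^a 1^ℕ`. -/
def onesFrom (a : ℕ) : ℕ → ℕ := fun k => if a ≤ k then 1 else 0

theorem canI_one : canI 1 = onesFrom := by
  funext a k
  simp only [canI, can, onesFrom, ← not_lt, ite_not]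

theorem range_canF_one : range (canF 1 : ℕ → ℕ → ℕ) = insert 0 (range onesFrom) := by
  have canF_zero : canF 1 0 = (0 : ℕ → ℕ) := rfl
  have canF_succ (a : ℕ) : canF 1 (a + 1) = onesFrom a := by
    funext k
    simp only [canF, can, onesFrom, Nat.add_one_ne_zero, if_false, Nat.add_lt_add_iff_right,
      ← not_lt, ite_not]
  rw [← Nat.range_of_succ (canF 1), singleton_union]
  exact congrArg₂ insert canF_zero (congrArg range (funext canF_succ))

theorem isFull_one_iff_range_eq {p : ℕ → ℕ → ℕ} :
    IsFull 1 p ↔ range p = insert 0 (range onesFrom) := by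
  rw [← range_canF_one]
  exact fsJump_eq_iff_range_eq

theorem isInitial_one_iff_range_eq {p : ℕ → ℕ → ℕ} :
    IsInitial 1 p ↔ range p = range onesFrom := by
  rw [← canI_one]
  exact fsJump_eq_iff_range_eq

section Columns

variable {X : Type*}

/-- The sequence whose `k`-th term is `1` if `x` has been hit by one of `U 0, …, U k`, and `0`
otherwise. -/
noncomputable def hitSeq (U : ℕ → Set X) (x : X) : ℕ → ℕ :=
  fun k => (accumulate U k).indicator 1 x

theorem hitSeq_eq_zero {U : ℕ → Set X} {x : X} (hx : x ∉ ⋃ n, U n) : hitSeq U x = 0 := by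
  funext k
  exact indicator_of_notMem (fun hk => hx (accumulate_subset_iUnion k hk)) 1

theorem hitSeq_mem_range_onesFrom {U : ℕ → Set X} {x : X} (hx : x ∈ ⋃ n, U n) :
    hitSeq U x ∈ range onesFrom := by
  classical
  have hit : ∃ n, x ∈ U n := mem_iUnion.1 hx
  refine ⟨Nat.find hit, ?_⟩
  funext k
  simp only [onesFrom, hitSeq, indicator_apply, mem_accumulate, Nat.find_le_iff, Pi.one_apply]

/-- All sequences `0^a 1^ℕ` interleaved with the hitting sequences of the families `U i`; this is
the element of `ℕ^(ℕ^2)` assigned to `x`. -/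
noncomputable def hitColumns (U : ℕ → ℕ → Set X) (x : X) : ℕ → ℕ → ℕ :=
  Sum.elim onesFrom (fun i => hitSeq (U i) x) ∘ Equiv.natSumNatEquivNat.symm

theorem range_hitColumns (U : ℕ → ℕ → Set X) (x : X) :
    range (hitColumns U x) = range onesFrom ∪ range fun i => hitSeq (U i) x := by
  rw [hitColumns, EquivLike.range_comp, Sum.elim_range]

theorem isFull_hitColumns {U : ℕ → ℕ → Set X} {x : X} (hx : ∃ i, x ∉ ⋃ n, U i n) :
    IsFull 1 (hitColumns U x) := by
  obtain ⟨i, hi⟩ := hx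
  rw [isFull_one_iff_range_eq, range_hitColumns]
  refine Subset.antisymm (union_subset (subset_insert _ _) ?_) (insert_subset ?_ subset_union_left)
  · rintro _ ⟨j, rfl⟩
    by_cases hj : x ∈ ⋃ n, U j n
    · exact mem_insert_of_mem _ (hitSeq_mem_range_onesFrom hj)
    · exact mem_insert_iff.2 (.inl (hitSeq_eq_zero hj))
  · exact .inr ⟨i, hitSeq_eq_zero hi⟩

theorem isInitial_hitColumns {U : ℕ → ℕ → Set X} {x : X} (hx : ∀ i, x ∈ ⋃ n, U i n) :
    IsInitial 1 (hitColumns U x) := by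
  rw [isInitial_one_iff_range_eq, range_hitColumns, union_eq_left, range_subset_iff]
  exact fun i => hitSeq_mem_range_onesFrom (hx i)

variable [TopologicalSpace X]

theorem continuous_hitSeq {U : ℕ → Set X} (hU : ∀ n, IsClopen (U n)) :
    Continuous (hitSeq U) := by
  refine continuous_pi fun k => ?_
  have isClopen_accumulate : IsClopen (accumulate U k) :=
    (finite_Iic k).isClopen_biUnion fun n _ => hU n
  exact isClopen_accumulate.continuous_indicator continuous_one

theorem continuous_hitColumns {U : ℕ → ℕ → Set X} (hU : ∀ i n, IsClopen (U i n)) :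
    Continuous (hitColumns U) := by
  refine continuous_pi fun j => ?_
  simp only [hitColumns, Function.comp_apply]
  rcases Equiv.natSumNatEquivNat.symm j with a | i
  · exact continuous_const
  · exact continuous_hitSeq (hU i)

end Columns

theorem exists_eq_iUnion_isClopen_of_isOpen {X : Type*} [TopologicalSpace X] {B : Set (Set X)}
    (hBc : B.Countable) (hBclopen : ∀ U ∈ B, IsClopen U) (hB : IsTopologicalBasis B)
    {A : Set X} (hA : IsOpen A) :
    ∃ U : ℕ → Set X, (∀ n, IsClopen (U n)) ∧ A = ⋃ n, U n := by
  obtain ⟨S, hSB, rfl⟩ := hB.open_eq_sUnion hA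
  obtain ⟨U, hU⟩ := ((hBc.mono hSB).insert ∅).exists_eq_range (insert_nonempty _ _)
  refine ⟨U, fun n => ?_, ?_⟩
  · rcases (hU ▸ mem_range_self n : U n ∈ insert ∅ S) with hn | hn
    · exact hn ▸ isClopen_empty
    · exact hBclopen _ (hSB hn)
  · rw [← sUnion_range, ← hU, sUnion_insert, empty_union]

theorem stmt_8_general {X : Type*} [TopologicalSpace X]
    (hX : ∀ A : Set X, IsOpen A → ∃ U : ℕ → Set X, (∀ n, IsClopen (U n)) ∧ A = ⋃ n, U n)
    (C : Set X) (hC : C ∈ SigmaLevel X 1) :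
    ∃ Γ : X → Tower 1, Continuous Γ ∧
      (∀ x ∈ C, IsFull 1 (Γ x)) ∧ (∀ x ∉ C, IsInitial 1 (Γ x)) := by
  obtain ⟨A, hA, rfl⟩ := hC
  choose U hU hAU using fun i => hX (A i) (hA i)
  refine ⟨hitColumns U, continuous_hitColumns hU, fun x hx => ?_, fun x hx => ?_⟩
  · exact isFull_hitColumns (by simpa only [hAU, mem_iUnion, mem_compl_iff] using hx)
  · exact isInitial_hitColumns (by simpa [hAU] using hx)

/-- if `X` has a countable basis of clopen sets and `C ∈ Σ⁰_2(X)`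
(here `SigmaLevel X 1`), then there is a continuous `Γ : X → ℕ^(ℕ^2)` (`= Tower 1`)
which is `full_2` on `C` and `initial_2` off `C`. -/
theorem stmt_8 {X : Type*} [TopologicalSpace X]
    (hX : ∃ B : Set (Set X), B.Countable ∧ (∀ U ∈ B, IsClopen U) ∧
      TopologicalSpace.IsTopologicalBasis B)
    (C : Set X) (hC : C ∈ SigmaLevel X 1) :
    ∃ Γ : X → Tower 1, Continuous Γ ∧
      (∀ x ∈ C, IsFull 1 (Γ x)) ∧ (∀ x ∉ C, IsInitial 1 (Γ x)) := by
  obtain ⟨B, hBc, hBclopen, hB⟩ := hX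
  exact stmt_8_general (fun _ => exists_eq_iUnion_isClopen_of_isOpen hBc hBclopen hB) C hC
end

section
/- Let n ≥ 1 and let A, B ∈ Mod be nonisomorphic structures. If there exists a set C ∈ Σ⁰_{2n-1}(Mod) such that every S ∈ Mod with S ≅ A belongs to C and no S ∈ Mod with S ≅ B belongs to C, then the family {A, B} is =_ℕ^{n+}-learnable. -/
/-!
Call a point `t` Wadge-hard for a class of sets when every set in the class is the preimage of the
`E`-class of `t` under a continuous function. Three moves propagate hardness up the hierarchy. If
continuous functions send `D i` to `t` and its complement into `{s 0, s 1, …}`, then listing their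
values together with all the `s k` sends `⋃ i, D i` to `{t, s 0, s 1, …}` and its complement to
`{s 0, s 1, …}`, up to the jump of `E`. For a decreasing sequence `B` whose members reduce to the
pair `a`, `b`, the product map sends `⋂ j, B j` to `(a, a, …)` and its complement to the sequences
`(a, …, a, b, b, …)`. Finally, a jump of a relation that can absorb integer tags can also absorb
`ω`-powers, so these sequences may be coded by single points. Each new jump thus handles one
countable intersection and one countable union, that is, two levels of the Borel hierarchy.
-/

open Set TopologicalSpace

section Interleave

variable {X : Type*}

/-- The sequence listing the terms of `p` at the even and those of `q` at the odd positions; it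
plays the role of `p ∪ q` for sequences viewed as enumerated sets. -/
def interleave (p q : ℕ → X) : ℕ → X :=
  Sum.elim p q ∘ Equiv.natSumNatEquivNat.symm

theorem forall_interleave {p q : ℕ → X} {P : X → Prop} :
    (∀ m, P (interleave p q m)) ↔ (∀ i, P (p i)) ∧ ∀ i, P (q i) :=
  (Equiv.natSumNatEquivNat.symm.surjective.forall
    (p := fun x => P (Sum.elim p q x))).symm.trans Sum.forall

theorem exists_interleave {p q : ℕ → X} {P : X → Prop} :
    (∃ m, P (interleave p q m)) ↔ (∃ i, P (p i)) ∨ ∃ i, P (q i) :=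
  (Equiv.natSumNatEquivNat.symm.surjective.exists
    (p := fun x => P (Sum.elim p q x))).symm.trans Sum.exists

theorem continuous_interleave {Y : Type*} [TopologicalSpace X] [TopologicalSpace Y]
    {f g : Y → ℕ → X} (hf : Continuous f) (hg : Continuous g) :
    Continuous fun y => interleave (f y) (g y) := by
  refine continuous_pi fun m => ?_
  simp only [interleave, Function.comp_apply]
  rcases Equiv.natSumNatEquivNat.symm m with i | i
  · exact (continuous_apply i).comp hf
  · exact (continuous_apply i).comp hg

end Interleave

section Jump

variable {X : Type*} {E : X → X → Prop}

theorem equivalence_fsJump (hE : Equivalence E) : Equivalence (FSJump E) where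
  refl _ := ⟨fun k => ⟨k, hE.refl _⟩, fun k => ⟨k, hE.refl _⟩⟩
  symm h := ⟨h.2, h.1⟩
  trans {p q r} hpq hqr := by
    have covered {u v w : ℕ → X} (huv : ∀ k, ∃ l, E (u k) (v l)) (hvw : ∀ k, ∃ l, E (v k) (w l))
        (k : ℕ) : ∃ l, E (u k) (w l) :=
      let ⟨l, hl⟩ := huv k
      let ⟨m, hm⟩ := hvw l
      ⟨m, hE.trans hl hm⟩
    exact ⟨covered hpq.1 hqr.1, covered hqr.2 hpq.2⟩

theorem fsJump_interleave_self (hE : Equivalence E) {p s : ℕ → X}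
    (hp : ∀ i, ∃ k, E (p i) (s k)) : FSJump E (interleave p s) s := by
  simp only [FSJump, exists_interleave]
  refine ⟨(forall_interleave (P := fun x => ∃ l, E x (s l))).2 ⟨hp, fun k => ⟨k, hE.refl _⟩⟩, ?_⟩
  exact fun k => .inr ⟨k, hE.refl _⟩

theorem fsJump_interleave_const (hE : Equivalence E) {p s : ℕ → X} {t : X}
    (hp : ∀ i, E (p i) t ∨ ∃ k, E (p i) (s k)) (ht : ∃ i, E (p i) t) :
    FSJump E (interleave p s) (interleave (fun _ => t) s) := by
  simp only [FSJump, exists_interleave, exists_const]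
  constructor
  · exact (forall_interleave (P := fun x => E x t ∨ ∃ l, E x (s l))).2
      ⟨hp, fun k => .inr ⟨k, hE.refl _⟩⟩
  · exact (forall_interleave (P := fun x => (∃ i, E x (p i)) ∨ ∃ l, E x (s l))).2
      ⟨fun _ => .inl (ht.imp fun _ => hE.symm), fun k => .inr ⟨k, hE.refl _⟩⟩

theorem not_fsJump_interleave_const {s : ℕ → X} {t : X} (ht : ∀ k, ¬ E t (s k)) :
    ¬ FSJump E (interleave (fun _ => t) s) s := fun h =>
  let ⟨k, hk⟩ := ((forall_interleave (P := fun x => ∃ l, E x (s l))).1 h.1).1 0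
  ht k hk

/-- The disjoint sum of countably many copies of `E`, realized on `ℕ × X`. A continuous reduction of
`NatSum E` to `E` amounts to continuous maps tagging the points of `X`, up to `E`, by integers. -/
def NatSum (E : X → X → Prop) (x y : ℕ × X) : Prop :=
  x.1 = y.1 ∧ E x.2 y.2

variable [TopologicalSpace X]

theorem contReduces_natSum_eq_nat : ContReduces (NatSum (@Eq ℕ)) (@Eq ℕ) :=
  ⟨fun x => Nat.pair x.1 x.2, continuous_of_discreteTopology, fun _ _ => Nat.pair_eq_pair.symm⟩

theorem contReduces_natSum_fsJump (h : ContReduces (NatSum E) E) :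
    ContReduces (NatSum (FSJump E)) (FSJump E) := by
  obtain ⟨tag, htag, hE⟩ := h
  refine ⟨fun x m => tag (x.1, x.2 m), by fun_prop, fun x y => ?_⟩
  simp only [FSJump, ← hE, NatSum, exists_and_left, forall_and, forall_const]
  tauto

/-- Listing the elements of all the sets `p k`, each tagged by `k`, codes the sequence `p`. -/
theorem contReduces_relPow_fsJump (h : ContReduces (NatSum E) E) :
    ContReduces (RelPow (FSJump E)) (FSJump E) := by
  obtain ⟨tag, htag, hE⟩ := h
  let code (p : ℕ → ℕ → X) (m : ℕ) : X := tag (m.unpair.1, p m.unpair.1 m.unpair.2)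
  have code_covered (p q : ℕ → ℕ → X) :
      (∀ m, ∃ m', E (code p m) (code q m')) ↔ ∀ k i, ∃ j, E (p k i) (q k j) := by
    simp only [code, ← hE, NatSum]
    constructor
    · intro h k i
      obtain ⟨m, hk, hm⟩ := h (Nat.pair k i)
      simp only [Nat.unpair_pair] at hk hm
      exact ⟨m.unpair.2, hk ▸ hm⟩
    · intro h m
      obtain ⟨j, hj⟩ := h m.unpair.1 m.unpair.2
      exact ⟨Nat.pair m.unpair.1 j, by simpa only [Nat.unpair_pair, true_and] using hj⟩
  refine ⟨code, by fun_prop, fun p q => ?_⟩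
  simp only [FSJump, RelPow, code_covered, forall_and]

end Jump

section WadgeHard

variable {X Y : Type*} [TopologicalSpace X] [TopologicalSpace Y] {E : X → X → Prop}
  {Γ Γ' : Set (Set Y)}

/-- The `E`-class of `t` is Wadge-hard for `Γ` relative to `S`: every `C ∈ Γ` is the preimage of
that class under a continuous function, the points outside `C` being sent into the `E`-saturation
of `S`, which misses the class of `t`. -/
def IsWadgeHard (E : X → X → Prop) (t : X) (S : Set X) (Γ : Set (Set Y)) : Prop :=
  (∀ s ∈ S, ¬ E t s) ∧ ∀ C ∈ Γ, ∃ f : Y → X, Continuous f ∧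
    (∀ y ∈ C, E (f y) t) ∧ ∀ y ∉ C, ∃ s ∈ S, E (f y) s

namespace IsWadgeHard

theorem mono {t : X} {S : Set X} (h : IsWadgeHard E t S Γ') (hΓ : Γ ⊆ Γ') :
    IsWadgeHard E t S Γ :=
  ⟨h.1, fun C hC => h.2 C (hΓ hC)⟩

theorem of_contReduces {X' : Type*} [TopologicalSpace X'] {E' : X' → X' → Prop} {t : X}
    {s : ℕ → X} (h : IsWadgeHard E t (range s) Γ) (hE : ContReduces E E') :
    ∃ t' s', IsWadgeHard E' t' (range (s' : ℕ → X')) Γ := by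
  obtain ⟨r, hr, hrE⟩ := hE
  refine ⟨r t, r ∘ s, ?_, fun C hC => ?_⟩
  · rintro _ ⟨k, rfl⟩ hk
    exact h.1 _ (mem_range_self k) ((hrE _ _).2 hk)
  · obtain ⟨f, hf, hfC, hfC'⟩ := h.2 C hC
    refine ⟨r ∘ f, hr.comp hf, fun y hy => (hrE _ _).1 (hfC y hy), fun y hy => ?_⟩
    obtain ⟨_, ⟨k, rfl⟩, hk⟩ := hfC' y hy
    exact ⟨_, mem_range_self k, (hrE _ _).1 hk⟩

theorem isClopen (hE : Equivalence E) {a b : X} (hab : ¬ E a b) :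
    IsWadgeHard E a {b} {C : Set Y | IsClopen C} := by
  classical
  refine ⟨by simpa using hab, fun C hC => ⟨C.piecewise (fun _ => a) (fun _ => b), ?_, ?_, ?_⟩⟩
  · refine continuous_const.piecewise (fun y hy => ?_) continuous_const
    simp [hC.frontier_eq] at hy
  · intro y hy
    simpa [hy] using hE.refl a
  · intro y hy
    simpa [hy] using hE.refl b

theorem iUnion (hE : Equivalence E) {t : X} {s : ℕ → X} (h : IsWadgeHard E t (range s) Γ) :
    IsWadgeHard (FSJump E) (interleave (fun _ => t) s) {s}
      {C | ∃ D : ℕ → Set Y, (∀ i, D i ∈ Γ) ∧ C = ⋃ i, D i} := by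
  constructor
  · rintro _ rfl
    exact not_fsJump_interleave_const fun k => h.1 _ (mem_range_self k)
  rintro _ ⟨D, hD, rfl⟩
  choose f hf hfD hfD' using fun i => h.2 (D i) (hD i)
  simp only [exists_range_iff] at hfD'
  refine ⟨fun y => interleave (fun i => f i y) s,
    continuous_interleave (continuous_pi hf) continuous_const, fun y hy => ?_, fun y hy => ?_⟩
  · obtain ⟨i, hi⟩ := mem_iUnion.1 hy
    refine fsJump_interleave_const hE (fun j => ?_) ⟨i, hfD i y hi⟩
    exact (em (y ∈ D j)).imp (hfD j y) (hfD' j y)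
  · simp only [mem_iUnion, not_exists] at hy
    exact ⟨s, rfl, fsJump_interleave_self hE fun i => hfD' i y (hy i)⟩

theorem iInter_antitone {a b : X} (h : IsWadgeHard E a {b} Γ) :
    IsWadgeHard (RelPow E) (fun _ => a) (range fun k j => if j < k then a else b)
      {C | ∃ B : ℕ → Set Y, (∀ j, B j ∈ Γ) ∧ Antitone B ∧ C = ⋂ j, B j} := by
  classical
  constructor
  · rintro _ ⟨k, rfl⟩ hk
    exact h.1 b rfl (by simpa using hk k)
  rintro _ ⟨B, hB, hanti, rfl⟩
  choose f hf hfB hfB' using fun j => h.2 (B j) (hB j)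
  simp only [mem_singleton_iff, exists_eq_left] at hfB'
  refine ⟨fun y j => f j y, continuous_pi hf, fun y hy j => hfB j y (mem_iInter.1 hy j), ?_⟩
  intro y hy
  have hy : ∃ j, y ∉ B j := by simpa using hy
  refine ⟨_, mem_range_self (Nat.find hy), fun j => ?_⟩
  dsimp only
  split_ifs with hj
  · exact hfB j y (not_not.1 (Nat.find_min hy hj))
  · exact hfB' j y fun hyj => Nat.find_spec hy (hanti (not_lt.1 hj) hyj)

theorem iUnion_iInter (hE : Equivalence E) (hpow : ContReduces (RelPow E) E) {a b : X}
    (h : IsWadgeHard E a {b} Γ) :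
    ∃ a' b', IsWadgeHard (FSJump E) a' {b'}
      {C | ∃ B : ℕ → ℕ → Set Y,
        (∀ i j, B i j ∈ Γ) ∧ (∀ i, Antitone (B i)) ∧ C = ⋃ i, ⋂ j, B i j} := by
  obtain ⟨t, s, hts⟩ := h.iInter_antitone.of_contReduces hpow
  refine ⟨_, _, (hts.iUnion hE).mono ?_⟩
  rintro _ ⟨B, hB, hanti, rfl⟩
  exact ⟨_, fun i => ⟨B i, hB i, hanti i, rfl⟩, rfl⟩

end IsWadgeHard

end WadgeHard

section SigmaLevel

variable {Y : Type*} [TopologicalSpace Y] {n : ℕ} {C D : Set Y}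

theorem union_mem_sigmaLevel (hC : C ∈ SigmaLevel Y n) (hD : D ∈ SigmaLevel Y n) :
    C ∪ D ∈ SigmaLevel Y n := by
  cases n with
  | zero => exact IsOpen.union hC hD
  | succ n =>
    obtain ⟨A, hA, rfl⟩ := hC
    obtain ⟨B, hB, rfl⟩ := hD
    refine ⟨interleave A B, forall_interleave.2 ⟨hA, hB⟩, ?_⟩
    ext y
    simp only [mem_union, mem_iUnion, exists_interleave (P := fun S => y ∈ Sᶜ)]

theorem inter_mem_sigmaLevel (hC : C ∈ SigmaLevel Y n) (hD : D ∈ SigmaLevel Y n) :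
    C ∩ D ∈ SigmaLevel Y n := by
  cases n with
  | zero => exact IsOpen.inter hC hD
  | succ n =>
    obtain ⟨A, hA, rfl⟩ := hC
    obtain ⟨B, hB, rfl⟩ := hD
    refine ⟨fun m => A m.unpair.1 ∪ B m.unpair.2, fun m => union_mem_sigmaLevel (hA _) (hB _), ?_⟩
    simp only [compl_union, iUnion_unpair fun i j => (A i)ᶜ ∩ (B j)ᶜ, iUnion_inter_iUnion]

theorem dissipate_mem_sigmaLevel {B : ℕ → Set Y} (hB : ∀ j, B j ∈ SigmaLevel Y n) (j : ℕ) :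
    dissipate B j ∈ SigmaLevel Y n := by
  induction j with
  | zero => simpa only [dissipate_zero_nat] using hB 0
  | succ j ih => simpa only [dissipate_succ] using inter_mem_sigmaLevel ih (hB (j + 1))

theorem exists_eq_iUnion_iInter_of_mem_sigmaLevel (hC : C ∈ SigmaLevel Y (n + 2)) :
    ∃ B : ℕ → ℕ → Set Y,
      (∀ i j, B i j ∈ SigmaLevel Y n) ∧ (∀ i, Antitone (B i)) ∧ C = ⋃ i, ⋂ j, B i j := by
  obtain ⟨A, hA, rfl⟩ := hC
  choose B hB hAB using hA
  refine ⟨fun i => dissipate (B i), fun i => dissipate_mem_sigmaLevel (hB i),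
    fun i => antitone_dissipate, ?_⟩
  simp only [hAB, compl_iUnion, compl_compl, iInter_dissipate]

theorem exists_isClopen_eq_iUnion_of_isOpen [SecondCountableTopology Y]
    (hY : IsTopologicalBasis {s : Set Y | IsClopen s}) {U : Set Y} (hU : IsOpen U) :
    ∃ V : ℕ → Set Y, (∀ i, IsClopen (V i)) ∧ U = ⋃ i, V i := by
  obtain ⟨T, hT, hTc, rfl⟩ := hY.exists_countable_biUnion_of_isOpen hU
  obtain ⟨V, hV⟩ := (hTc.insert ∅).exists_eq_range (insert_nonempty _ _)
  refine ⟨V, fun i => ?_, ?_⟩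
  · have hVi : V i ∈ insert ∅ T := hV ▸ mem_range_self i
    exact hVi.elim (fun h => h ▸ isClopen_empty) (fun h => hT h)
  · rw [← sUnion_eq_biUnion, ← sUnion_range, ← hV, sUnion_insert, empty_union]

end SigmaLevel

theorem equivalence_eqNatPlus : ∀ n, Equivalence (eqNatPlus n)
  | 0 => equivalence_fsJump eq_equivalence
  | n + 1 => equivalence_fsJump (equivalence_eqNatPlus n)

theorem contReduces_natSum_eqNatPlus : ∀ n, ContReduces (NatSum (eqNatPlus n)) (eqNatPlus n)
  | 0 => contReduces_natSum_fsJump contReduces_natSum_eq_nat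
  | n + 1 => contReduces_natSum_fsJump (contReduces_natSum_eqNatPlus n)

theorem contReduces_relPow_eqNatPlus : ∀ n, ContReduces (RelPow (eqNatPlus n)) (eqNatPlus n)
  | 0 => contReduces_relPow_fsJump contReduces_natSum_eq_nat
  | n + 1 => contReduces_relPow_fsJump (contReduces_natSum_eqNatPlus n)

theorem exists_isWadgeHard_eqNatPlus {Y : Type*} [TopologicalSpace Y] [SecondCountableTopology Y]
    (hY : IsTopologicalBasis {s : Set Y | IsClopen s}) (n : ℕ) :
    ∃ a b, IsWadgeHard (eqNatPlus n) a {b} (SigmaLevel Y (2 * n)) := by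
  induction n with
  | zero =>
    have h : IsWadgeHard (· = ·) 0 (range fun _ : ℕ => 1) {C : Set Y | IsClopen C} := by
      simpa only [range_const] using IsWadgeHard.isClopen eq_equivalence zero_ne_one
    exact ⟨_, _, (h.iUnion eq_equivalence).mono
      fun U hU => exists_isClopen_eq_iUnion_of_isOpen hY hU⟩
  | succ n ih =>
    obtain ⟨a, b, hab⟩ := ih
    obtain ⟨a', b', hab'⟩ :=
      hab.iUnion_iInter (equivalence_eqNatPlus n) (contReduces_relPow_eqNatPlus n)
    exact ⟨a', b', hab'.mono fun C hC => exists_eq_iUnion_iInter_of_mem_sigmaLevel hC⟩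

section Structures

variable {ι : Type} {ar : ι → ℕ}

theorem equivalence_iso : Equivalence (Iso : Md ι ar → Md ι ar → Prop) where
  refl _ := ⟨id, Function.bijective_id, fun _ _ => rfl⟩
  symm := by
    rintro A B ⟨σ, hσ, h⟩
    let e := Equiv.ofBijective σ hσ
    refine ⟨e.symm, e.symm.bijective, fun i v => ?_⟩
    rw [h, ← Function.comp_assoc, show σ ∘ e.symm = id from e.self_comp_symm, Function.id_comp]
  trans := by
    rintro A B C ⟨σ, hσ, hAB⟩ ⟨τ, hτ, hBC⟩
    exact ⟨τ ∘ σ, hτ.comp hσ, fun i v => (hAB i v).trans (hBC i (σ ∘ v))⟩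

instance [Countable ι] : SecondCountableTopology (Md ι ar) :=
  inferInstanceAs (SecondCountableTopology (∀ i : ι, (Fin (ar i) → ℕ) → Bool))

theorem isTopologicalBasis_isClopen_md : IsTopologicalBasis {s : Set (Md ι ar) | IsClopen s} :=
  isTopologicalBasis_isClopen (X := ∀ i : ι, (Fin (ar i) → ℕ) → Bool)

theorem learnable_of_continuousOn {X : Type*} [TopologicalSpace X] {E : X → X → Prop}
    (hE : Equivalence E) {K : Set (Md ι ar)} {f : Md ι ar → X} (hf : ContinuousOn f (LearnDom K))
    (hcopy : ∀ A ∈ K, ∀ S, Iso S A → E (f S) (f A))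
    (hinj : ∀ A ∈ K, ∀ B ∈ K, E (f A) (f B) → Iso A B) : Learnable E K := by
  refine ⟨(LearnDom K).domRestrict f, hf.domRestrict, ?_⟩
  rintro ⟨S, A, hA, hSA⟩ ⟨S', A', hA', hSA'⟩
  have hfS := hcopy A hA S hSA
  have hfS' := hcopy A' hA' S' hSA'
  constructor
  · intro hSS'
    have hS'A : Iso S' A := equivalence_iso.trans (equivalence_iso.symm hSS') hSA
    exact hE.trans hfS (hE.symm (hcopy A hA S' hS'A))
  · intro hff
    have hAA' : Iso A A' := hinj A hA A' hA' (hE.trans (hE.symm hfS) (hE.trans hff hfS'))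
    exact equivalence_iso.trans hSA (equivalence_iso.trans hAA' (equivalence_iso.symm hSA'))

end Structures

/-- for `n ≥ 1` (here via the shift: `eqNatPlus n = =_ℕ^{(n+1)+}` and
`SigmaLevel (Md ι ar) (2*n) = Σ⁰_{2n+1} = Σ⁰_{2(n+1)-1}`): if `A ≇ B` and some
`Σ⁰_{2(n+1)-1}` set `C` contains every copy of `A` and no copy of `B`, then
`{A, B}` is `=_ℕ^{(n+1)+}`-learnable. -/
theorem stmt_10 {ι : Type} [Countable ι] (ar : ι → ℕ) (n : ℕ)
    (A B : Md ι ar) (hAB : ¬ Iso A B)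
    (C : Set (Md ι ar)) (hC : C ∈ SigmaLevel (Md ι ar) (2 * n))
    (hA : ∀ S, Iso S A → S ∈ C) (hB : ∀ S, Iso S B → S ∉ C) :
    Learnable (eqNatPlus n) ({A, B} : Set (Md ι ar)) := by
  obtain ⟨a, b, hab, hhard⟩ :=
    exists_isWadgeHard_eqNatPlus (isTopologicalBasis_isClopen_md (ar := ar)) n
  obtain ⟨f, hf, hfC, hfC'⟩ := hhard C hC
  simp only [mem_singleton_iff, forall_eq, exists_eq_left] at hab hfC'
  have hE := equivalence_eqNatPlus n
  have hfA (S) (hS : Iso S A) : eqNatPlus n (f S) a := hfC S (hA S hS)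
  have hfB (S) (hS : Iso S B) : eqNatPlus n (f S) b := hfC' S (hB S hS)
  have hfAA := hfA A (equivalence_iso.refl A)
  have hfBB := hfB B (equivalence_iso.refl B)
  have hfAB : ¬ eqNatPlus n (f A) (f B) := fun h =>
    hab (hE.trans (hE.symm hfAA) (hE.trans h hfBB))
  refine learnable_of_continuousOn hE hf.continuousOn ?_ ?_
  · rintro _ (rfl | rfl) S hS
    · exact hE.trans (hfA S hS) (hE.symm hfAA)
    · exact hE.trans (hfB S hS) (hE.symm hfBB)
  · rintro _ (rfl | rfl) _ (rfl | rfl) h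
    · exact equivalence_iso.refl _
    · exact absurd h hfAB
    · exact absurd (hE.symm h) hfAB
    · exact equivalence_iso.refl _
end
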